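/- Let M be a topological space and ≪ a transitive binary relation on M whose graph is open in M × M and which is future-dense and past-dense. Let (P_k)_{k∈ℕ} be a sequence of past sets (I⁻(P_k) = P_k for all k) whose Hausdorff closed limit Π_∞ exists. Then I⁻(Π_∞) equals the interior of Π_∞, and P_∞ := interior(Π_∞) is itself a past set, i.e. I⁻(P_∞) = P_∞. -/

import Mathlib

/-!
If `x ≪ s` with `s` in the lower limit of past sets `P k`, then the open future of `x` meets all
but finitely many `P k`, so `x` itself lies in all but finitely many `I⁻(P k) = P k`. Thus the
lower limit contains its own past. Any set `S` with `I⁻(S) ⊆ S` satisfies `I⁻(S) = interior S`: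
the past `I⁻(S)` is open, and by future-density every point of `interior S` precedes some point
of `interior S`.
-/

/-- The Hausdorff upper limit of a sequence of subsets. -/
def hausdorffUpperLimit {M : Type*} [TopologicalSpace M] (S : ℕ → Set M) : Set M :=
  {p | ∀ U ∈ nhds p, {k : ℕ | (U ∩ S k).Nonempty}.Infinite}

/-- The Hausdorff lower limit of a sequence of subsets. -/
def hausdorffLowerLimit {M : Type*} [TopologicalSpace M] (S : ℕ → Set M) : Set M :=
  {p | ∀ U ∈ nhds p, {k : ℕ | ¬ (U ∩ S k).Nonempty}.Finite}

/-- The timelike past of a set `S`: all points related to some point of `S`. -/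
def Iminus {M : Type*} (r : M → M → Prop) (S : Set M) : Set M :=
  {x | ∃ s ∈ S, r x s}

open Filter Topology

section

variable {M : Type*} {r : M → M → Prop} {S T : Set M}

theorem Iminus_mono (h : S ⊆ T) : Iminus r S ⊆ Iminus r T :=
  fun _ ⟨s, hs, hxs⟩ => ⟨s, h hs, hxs⟩

theorem Iminus_eq_biUnion : Iminus r S = ⋃ s ∈ S, {x | r x s} := by
  ext x
  simp only [Iminus, Set.mem_ofPred_eq, Set.mem_iUnion, exists_prop]

variable [TopologicalSpace M]

theorem isOpen_Iminus (hpast : ∀ y, IsOpen {x | r x y}) : IsOpen (Iminus r S) := by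
  rw [Iminus_eq_biUnion]
  exact isOpen_biUnion fun s _ => hpast s

theorem subset_Iminus_of_isOpen (hS : IsOpen S) (hfd : ∀ x, x ∈ closure {y | r x y}) :
    S ⊆ Iminus r S :=
  fun x hx => mem_closure_iff.1 (hfd x) S hS hx

theorem Iminus_eq_interior (hpast : ∀ y, IsOpen {x | r x y})
    (hfd : ∀ x, x ∈ closure {y | r x y}) (hS : Iminus r S ⊆ S) : Iminus r S = interior S :=
  (interior_maximal hS (isOpen_Iminus hpast)).antisymm <|
    (subset_Iminus_of_isOpen isOpen_interior hfd).trans (Iminus_mono interior_subset)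

theorem Iminus_interior (hpast : ∀ y, IsOpen {x | r x y})
    (hfd : ∀ x, x ∈ closure {y | r x y}) (hS : Iminus r S ⊆ S) :
    Iminus r (interior S) = interior S :=
  ((Iminus_mono interior_subset).trans (Iminus_eq_interior hpast hfd hS).subset).antisymm
    (subset_Iminus_of_isOpen isOpen_interior hfd)

variable {P : ℕ → Set M} {x : M}

theorem mem_hausdorffLowerLimit_iff :
    x ∈ hausdorffLowerLimit P ↔ ∀ U ∈ 𝓝 x, ∀ᶠ k in atTop, (U ∩ P k).Nonempty := by
  simp only [← Nat.cofinite_eq_atTop, eventually_cofinite, hausdorffLowerLimit, Set.mem_ofPred_eq]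

theorem mem_hausdorffLowerLimit_of_eventually_mem (h : ∀ᶠ k in atTop, x ∈ P k) :
    x ∈ hausdorffLowerLimit P :=
  mem_hausdorffLowerLimit_iff.2 fun _ hU => h.mono fun _ hk => ⟨x, mem_of_mem_nhds hU, hk⟩

theorem eventually_mem_Iminus_of_mem_Iminus_hausdorffLowerLimit (hfut : IsOpen {y | r x y})
    (hx : x ∈ Iminus r (hausdorffLowerLimit P)) : ∀ᶠ k in atTop, x ∈ Iminus r (P k) := by
  obtain ⟨s, hs, hxs⟩ := hx
  have hmeets : ∀ᶠ k in atTop, ({y | r x y} ∩ P k).Nonempty :=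
    mem_hausdorffLowerLimit_iff.1 hs _ (hfut.mem_nhds hxs)
  exact hmeets.mono fun _ ⟨y, hxy, hy⟩ => ⟨y, hy, hxy⟩

theorem Iminus_hausdorffLowerLimit_subset (hfut : ∀ x, IsOpen {y | r x y})
    (hP : ∀ k, Iminus r (P k) ⊆ P k) :
    Iminus r (hausdorffLowerLimit P) ⊆ hausdorffLowerLimit P := fun x hx =>
  mem_hausdorffLowerLimit_of_eventually_mem <|
    (eventually_mem_Iminus_of_mem_Iminus_hausdorffLowerLimit (hfut x) hx).mono fun k hk => hP k hk

end

theorem interior_hausdorffLimit_of_past_sets_general {M : Type*} [TopologicalSpace M]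
    (r : M → M → Prop)
    (hfut : ∀ x, IsOpen {y | r x y})
    (hpast : ∀ y, IsOpen {x | r x y})
    (hfd : ∀ x, x ∈ closure {y | r x y})
    (P : ℕ → Set M) (hP : ∀ k, Iminus r (P k) ⊆ P k) :
    Iminus r (hausdorffLowerLimit P) = interior (hausdorffLowerLimit P) ∧
      Iminus r (interior (hausdorffLowerLimit P)) = interior (hausdorffLowerLimit P) :=
  have hsub := Iminus_hausdorffLowerLimit_subset hfut hP
  ⟨Iminus_eq_interior hpast hfd hsub, Iminus_interior hpast hfd hsub⟩

theorem interior_hausdorffLimit_of_past_sets {M : Type*} [TopologicalSpace M]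
    (r : M → M → Prop)
    (htrans : Transitive r)
    (hopen : IsOpen {p : M × M | r p.1 p.2})
    (hfd : ∀ x : M, x ∈ closure {y | r x y})
    (hpd : ∀ x : M, x ∈ closure {y | r y x})
    (P : ℕ → Set M) (hP : ∀ k, Iminus r (P k) = P k)
    (PiInf : Set M)
    (hup : hausdorffUpperLimit P = PiInf) (hlow : hausdorffLowerLimit P = PiInf) :
    Iminus r PiInf = interior PiInf ∧ Iminus r (interior PiInf) = interior PiInf := by
  subst hlow
  exact interior_hausdorffLimit_of_past_sets_general r
    (fun x => hopen.preimage (.prodMk_right x)) (fun y => hopen.preimage (.prodMk_left y))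
    hfd P (fun k => (hP k).subset)
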